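/- For every κ with 0 < κ < 1/2 and every integer n ≥ 3, there exists a real polynomial p of degree n such that every real zero of p is simple, the derivative p' has n − 1 distinct real zeros (i.e., all zeros of p' are real and simple), and Z_ℝ(H_κ[p]) = n + Z_ℝ(p) − 2. -/

import Mathlib

/-!
The polynomial is built with `n` distinct real zeros and with all `2n - 2` zeros of `Hk κ p` real,
so that `Zreal (Hk κ p) = 2n - 2 = n + Zreal p - 2`.

For `p` of degree `n ≥ 2` and `κ < 1/2`, the coefficient of `X ^ (2n - 2)` in `Hk κ p` is
`(κ n² - n (n - 1)) * (leading coefficient)²`, which is negative, so `Hk κ p` is negative near `±∞`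
(`coeff_Hk_neg`, `exists_Hk_neg`). At a simple real zero of `p` it equals `κ * (derivative p) ^ 2 > 0`.

Call `a₀ < a₁ < … < a₂ₙ₋₂` an alternating sequence for `p` if `Hk κ p` is negative at the points of
even index and positive at those of odd index, and all zeros of `p` lie to the left of the last
point. By the intermediate value theorem such a sequence gives `2n - 2` zeros. For `n = 2` the
polynomial `X² - 1` has one, thanks to `κ < 1/2`. If `p` has one, so does `p * (1 - δ X)` for small
`δ > 0`: the old signs persist by continuity in `δ`, the new simple zero `1 / δ` lies to the right
of all the old points and makes `Hk` positive, and beyond it `Hk` is eventually negative.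
Finally, Rolle's theorem gives the `n - 1` distinct zeros of the derivative of `p`.
-/

open Polynomial

/-- `Hk κ p = κ·(p')² − p·p''`. -/
noncomputable def Hk (κ : ℝ) (p : ℝ[X]) : ℝ[X] :=
  C κ * (derivative p) ^ 2 - p * derivative (derivative p)

/-- `Zreal q` : number of real roots of `q` counted with multiplicity. -/
noncomputable def Zreal (q : ℝ[X]) : ℕ := Multiset.card q.roots

/-- `Zcomplex q` : number of non-real complex roots of `q` counted with multiplicity. -/
noncomputable def Zcomplex (q : ℝ[X]) : ℕ :=
  Multiset.card ((q.map (algebraMap ℝ ℂ)).roots.filter (fun z => z.im ≠ 0))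

/-- Number of real zeros of `Q_κ[p] = H_κ[p]/(p')²` counted with multiplicity. -/
noncomputable def ZQ (κ : ℝ) (p : ℝ[X]) : ℕ :=
  ∑ᶠ x : ℝ, (rootMultiplicity x (Hk κ p) - 2 * rootMultiplicity x (derivative p))

open scoped Classical in
/-- `ZIcount I q` : number of roots of `q` in the set `I` counted with multiplicity. -/
noncomputable def ZIcount (I : Set ℝ) (q : ℝ[X]) : ℕ :=
  Multiset.card (q.roots.filter (fun x => x ∈ I))

/-- `Zdist q` : number of distinct real roots of `q`. -/
noncomputable def Zdist (q : ℝ[X]) : ℕ := q.roots.toFinset.card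

/-- `a 0 < ⋯ < a (2n - 2)` witnesses that `Hk κ p` changes sign `2n - 2` times, starting and ending
with a negative value; moreover `p` has degree `n` and `n` distinct real zeros, all of them to the
left of `a (2n - 2)`. The degree is written `n = m + 1`, and the values of `a` beyond `2 * m` are
irrelevant. -/
def Alternating (κ : ℝ) (m : ℕ) (p : ℝ[X]) (a : ℕ → ℝ) : Prop :=
  p.natDegree = m + 1 ∧ m + 1 ≤ p.roots.toFinset.card ∧
    (∀ x, p.IsRoot x → x < a (2 * m)) ∧
    (∀ i < 2 * m, a i < a (i + 1)) ∧
    (∀ i ≤ 2 * m, (-1 : ℝ) ^ i * (Hk κ p).eval (a i) < 0)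

lemma natDegree_Hk_le (κ : ℝ) {m : ℕ} (hm : 1 ≤ m) {p : ℝ[X]} (hp : p.natDegree = m + 1) :
    (Hk κ p).natDegree ≤ 2 * m := by
  have h1 : (derivative p).natDegree ≤ m := by
    have := natDegree_derivative_le p
    omega
  have h2 : (derivative (derivative p)).natDegree ≤ m - 1 := by
    have := natDegree_derivative_le (derivative p)
    omega
  unfold Hk
  refine (natDegree_sub_le _ _).trans (max_le ?_ ?_)
  · refine (natDegree_C_mul_le _ _).trans ?_
    refine natDegree_pow_le.trans ?_
    omega
  · refine natDegree_mul_le.trans ?_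
    omega

lemma coeff_Hk_neg {κ : ℝ} (hκ : κ < 1 / 2) {m : ℕ} (hm : 1 ≤ m) {p : ℝ[X]}
    (hp : p.natDegree = m + 1) : (Hk κ p).coeff (2 * m) < 0 := by
  obtain ⟨k, rfl⟩ : ∃ k, m = k + 1 := ⟨m - 1, by omega⟩
  have h1 : (derivative p).natDegree ≤ k + 1 := by
    have := natDegree_derivative_le p
    omega
  have h2 : (derivative (derivative p)).natDegree ≤ k := by
    have := natDegree_derivative_le (derivative p)
    omega
  have e1 : ((derivative p) ^ 2).coeff (2 * (k + 1)) = (derivative p).coeff (k + 1) ^ 2 := by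
    rw [sq, two_mul, coeff_mul_add_eq_of_natDegree_le h1 h1, sq]
  have e2 : (p * derivative (derivative p)).coeff (2 * (k + 1))
      = p.coeff (k + 2) * (derivative (derivative p)).coeff k := by
    rw [show 2 * (k + 1) = (k + 2) + k by ring, coeff_mul_add_eq_of_natDegree_le (by omega) h2]
  have hc : p.coeff (k + 2) ≠ 0 := by
    have h0 : p ≠ 0 := by
      rintro rfl
      simp at hp
    have := leadingCoeff_ne_zero.mpr h0
    rwa [leadingCoeff, hp] at this
  have hc2 : 0 < p.coeff (k + 2) ^ 2 := by positivity
  unfold Hk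
  rw [coeff_sub, coeff_C_mul, e1, e2]
  simp only [coeff_derivative, Nat.cast_add, Nat.cast_one]
  have hk : (0 : ℝ) ≤ k := Nat.cast_nonneg k
  have : κ * ((k : ℝ) + 2) ^ 2 - (k + 1) * (k + 2) < 0 := by
    have h3 : 0 < (1 / 2 - κ) * ((k : ℝ) + 2) ^ 2 := mul_pos (by linarith) (by positivity)
    nlinarith
  calc _ = p.coeff (k + 2) ^ 2 * (κ * ((k : ℝ) + 2) ^ 2 - (k + 1) * (k + 2)) := by
        rw [show k + 1 + 1 = k + 2 by ring]
        ring
    _ < 0 := mul_neg_of_pos_of_neg hc2 this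

lemma exists_Hk_neg {κ : ℝ} (hκ : κ < 1 / 2) {m : ℕ} (hm : 1 ≤ m) {p : ℝ[X]}
    (hp : p.natDegree = m + 1) (b : ℝ) : ∃ x, b < x ∧ (Hk κ p).eval x < 0 := by
  have hc := coeff_Hk_neg hκ hm hp
  have hd : (Hk κ p).natDegree = 2 * m :=
    le_antisymm (natDegree_Hk_le κ hm hp) (le_natDegree_of_ne_zero hc.ne)
  have ht := (Hk κ p).tendsto_atBot_of_leadingCoeff_nonpos
    (natDegree_pos_iff_degree_pos.mp (by omega)) (by rw [leadingCoeff, hd]; exact hc.le)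
  exact ((Filter.eventually_gt_atTop b).and (ht.eventually_lt_atBot 0)).exists

/-- Counting zeros by sign changes. -/
lemma le_card_roots_of_alternating {q : ℝ[X]} {N : ℕ} {a : ℕ → ℝ} (hq : q ≠ 0)
    (ha : ∀ i < N, a i < a (i + 1))
    (hs : ∀ i ≤ N, (-1 : ℝ) ^ i * q.eval (a i) < 0) : N ≤ q.roots.toFinset.card := by
  have key : ∀ i, ∃ c, i < N → a i < c ∧ c < a (i + 1) ∧ q.eval c = 0 := by
    intro i
    by_cases hi : i < N
    swap
    · exact ⟨0, fun h => absurd h hi⟩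
    have h1 := hs i hi.le
    have h2 := hs (i + 1) hi
    have hcont : ContinuousOn (fun x => (-1 : ℝ) ^ i * q.eval x) (Set.Icc (a i) (a (i + 1))) := by
      fun_prop
    have h0 : (0 : ℝ) ∈ Set.Ioo ((-1 : ℝ) ^ i * q.eval (a i))
        ((-1 : ℝ) ^ i * q.eval (a (i + 1))) := by
      refine ⟨h1, ?_⟩
      rw [pow_succ] at h2
      linarith
    obtain ⟨c, hc, hc0⟩ := intermediate_value_Ioo (ha i hi).le hcont h0
    refine ⟨c, fun _ => ⟨hc.1, hc.2, ?_⟩⟩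
    have hne : (-1 : ℝ) ^ i ≠ 0 := by positivity
    exact (mul_eq_zero.mp hc0).resolve_left hne
  choose c hc using key
  have hmono : ∀ i j, i < j → j < N → c i < c j := by
    intro i j hij hj
    have hle : ∀ k, i + 1 ≤ k → k < N → a (i + 1) ≤ a k := by
      intro k hk
      induction k, hk using Nat.le_induction with
      | base => intro _; exact le_rfl
      | succ k _ ih => intro hk'; exact (ih (by omega)).trans (ha k (by omega)).le
    exact (hc i (by omega)).2.1.trans ((hle j hij hj).trans_lt (hc j hj).1)
  have hinj : Set.InjOn c (Finset.range N : Set ℕ) := by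
    intro i hi j hj hij
    simp only [Finset.coe_range, Set.mem_Iio] at hi hj
    rcases lt_trichotomy i j with h | h | h
    · exact absurd hij (hmono i j h hj).ne
    · exact h
    · exact absurd hij (hmono j i h hi).ne'
  calc N = ((Finset.range N).image c).card := by
        rw [Finset.card_image_of_injOn hinj, Finset.card_range]
    _ ≤ _ := by
      refine Finset.card_le_card fun x hx => ?_
      obtain ⟨i, hi, rfl⟩ := Finset.mem_image.mp hx
      rw [Multiset.mem_toFinset, mem_roots hq]
      exact (hc i (Finset.mem_range.mp hi)).2.2

lemma alternating_base {κ : ℝ} (hκ0 : 0 < κ) (hκ : κ < 1 / 2) :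
    ∃ p a, Alternating κ 1 p a := by
  have hd : (X ^ 2 - 1 : ℝ[X]).natDegree = 2 := by
    rw [← C_1]
    exact natDegree_X_pow_sub_C
  have h0 : (X ^ 2 - 1 : ℝ[X]) ≠ 0 := by
    intro h
    simp [h] at hd
  have hH : ∀ x, (Hk κ (X ^ 2 - 1)).eval x = 4 * κ * x ^ 2 - 2 * x ^ 2 + 2 := by
    intro x
    simp [Hk]
    ring
  -- `T` is chosen so that `(1 - 2 * κ) * T ^ 2 = T > 1`.
  obtain ⟨T, hT⟩ : ∃ T : ℝ, T * (1 - 2 * κ) = 1 :=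
    ⟨1 / (1 - 2 * κ), by
      have : 1 - 2 * κ ≠ 0 := by linarith
      field_simp⟩
  have hT0 : 0 < T := pos_of_mul_pos_left (hT ▸ one_pos) (by linarith)
  have hT1 : 1 < T := by nlinarith
  have hneg : 4 * κ * T ^ 2 - 2 * T ^ 2 + 2 < 0 := by
    have : 4 * κ * T ^ 2 - 2 * T ^ 2 + 2 = 2 - 2 * T * (T * (1 - 2 * κ)) := by ring
    rw [this, hT]
    linarith
  refine ⟨X ^ 2 - 1, fun i => ((i : ℝ) - 1) * T, hd, ?_, ?_, ?_, ?_⟩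
  · have hs : ({1, -1} : Finset ℝ) ⊆ (X ^ 2 - 1 : ℝ[X]).roots.toFinset := by
      intro x hx
      rw [Multiset.mem_toFinset, mem_roots h0]
      simp only [Finset.mem_insert, Finset.mem_singleton] at hx
      rcases hx with rfl | rfl <;> simp
    refine le_trans ?_ (Finset.card_le_card hs)
    rw [Finset.card_pair (by norm_num)]
  · intro x hx
    simp [IsRoot] at hx
    norm_num
    nlinarith
  · intro i _
    push_cast
    linarith
  · intro i hi
    rw [hH]
    interval_cases i
    · norm_num
      linarith
    · norm_num
    · norm_num
      linarith

lemma alternating_step {κ : ℝ} (hκ0 : 0 < κ) (hκ : κ < 1 / 2) {m : ℕ} {p : ℝ[X]} {a : ℕ → ℝ}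
    (h : Alternating κ m p a) : ∃ q b, Alternating κ (m + 1) q b := by
  obtain ⟨hd, hr, hlt, hmono, hs⟩ := h
  have hp0 : p ≠ 0 := by
    rintro rfl
    simp at hd
  -- The old signs, and the position of the new zero, are open conditions on `δ`.
  have hev : ∀ᶠ δ in nhds (0 : ℝ), (∀ i ∈ Finset.range (2 * m + 1),
      (-1 : ℝ) ^ i * (Hk κ (p * (1 - C δ * X))).eval (a i) < 0) ∧ δ * a (2 * m) < 1 := by
    refine Filter.Eventually.and ?_ ?_
    · rw [Filter.eventually_all_finset]
      intro i hi
      have hc : Continuous fun δ : ℝ =>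
          (-1 : ℝ) ^ i * (Hk κ (p * (1 - C δ * X))).eval (a i) := by
        simp only [Hk, derivative_mul, derivative_sub, derivative_one, derivative_C, derivative_X,
          derivative_add, eval_sub, eval_mul, eval_add, eval_pow, eval_C, eval_X, eval_one,
          zero_mul, mul_one, zero_add, zero_sub, mul_neg, derivative_neg, eval_neg, eval_zero]
        fun_prop
      refine hc.continuousAt.eventually_lt continuousAt_const ?_
      simpa using hs i (by simpa [Nat.lt_succ_iff] using hi)
    · have hc : Continuous fun δ : ℝ => δ * a (2 * m) := by fun_prop
      exact hc.continuousAt.eventually_lt continuousAt_const (by simp)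
  obtain ⟨δ, ⟨hsδ, haδ⟩, hδ⟩ := ((hev.filter_mono nhdsWithin_le_nhds).and
    (self_mem_nhdsWithin : Set.Ioi (0 : ℝ) ∈ nhdsWithin 0 (Set.Ioi 0))).exists
  have hδ : 0 < δ := hδ
  have har : a (2 * m) < 1 / δ := by
    rw [lt_div_iff₀ hδ]
    linarith
  have hl : (1 - C δ * X : ℝ[X]).natDegree = 1 := by
    have : (1 - C δ * X : ℝ[X]) = C (-δ) * X + C 1 := by
      simp
      ring
    rw [this, natDegree_linear (by linarith)]
  have hl0 : (1 - C δ * X : ℝ[X]) ≠ 0 := by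
    intro h
    simp [h] at hl
  have hqd : (p * (1 - C δ * X)).natDegree = m + 1 + 1 := by
    rw [natDegree_mul hp0 hl0, hd, hl]
  have hq0 : p * (1 - C δ * X) ≠ 0 := mul_ne_zero hp0 hl0
  have hroot : ∀ x, (p * (1 - C δ * X)).IsRoot x → p.IsRoot x ∨ x = 1 / δ := by
    intro x hx
    rw [IsRoot, eval_mul, mul_eq_zero] at hx
    refine hx.imp id fun h => ?_
    simp at h
    rw [eq_div_iff hδ.ne']
    linarith
  have hpr : p.eval (1 / δ) ≠ 0 := fun h => lt_asymm har (hlt _ h)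
  have hHr : 0 < (Hk κ (p * (1 - C δ * X))).eval (1 / δ) := by
    have e1 : (1 - C δ * X : ℝ[X]).eval (1 / δ) = 0 := by
      simp [hδ.ne']
    have e2 : (derivative (p * (1 - C δ * X))).eval (1 / δ) = -(p.eval (1 / δ) * δ) := by
      rw [derivative_mul, eval_add, eval_mul, e1]
      simp
    rw [Hk, eval_sub, eval_mul, eval_mul, eval_mul, e1, eval_pow, e2, eval_C]
    have : 0 < (p.eval (1 / δ) * δ) ^ 2 := by positivity
    nlinarith
  obtain ⟨t, hrt, ht⟩ := exists_Hk_neg hκ (by omega) hqd (1 / δ)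
  refine ⟨p * (1 - C δ * X),
    fun i => if i ≤ 2 * m then a i else if i = 2 * m + 1 then 1 / δ else t, hqd, ?_, ?_, ?_, ?_⟩
  · have hsub : insert (1 / δ) p.roots.toFinset ⊆ (p * (1 - C δ * X)).roots.toFinset := by
      intro x hx
      rw [Multiset.mem_toFinset, mem_roots hq0, IsRoot, eval_mul]
      rw [Finset.mem_insert, Multiset.mem_toFinset, mem_roots hp0] at hx
      rcases hx with rfl | hx
      · simp [hδ.ne']
      · rw [hx.eq_zero, zero_mul]
    refine le_trans ?_ (Finset.card_le_card hsub)
    rw [Finset.card_insert_of_notMem]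
    · omega
    · rw [Multiset.mem_toFinset, mem_roots hp0]
      exact hpr
  · intro x hx
    dsimp only
    rw [if_neg (by omega), if_neg (by omega)]
    rcases hroot x hx with h | rfl
    · exact (hlt x h).trans (har.trans hrt)
    · exact hrt
  · intro i hi
    dsimp only
    rcases lt_or_ge i (2 * m) with h | h
    · rw [if_pos h.le, if_pos (by omega)]
      exact hmono i h
    · obtain rfl | rfl : i = 2 * m ∨ i = 2 * m + 1 := by omega
      · simpa using har
      · simpa using hrt
  · intro i hi
    rcases le_or_gt i (2 * m) with h | h
    · simp only [if_pos h]
      exact hsδ i (by simpa [Nat.lt_succ_iff] using h)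
    · obtain rfl | rfl : i = 2 * m + 1 ∨ i = 2 * m + 2 := by omega
      · simp only [if_neg (show ¬ 2 * m + 1 ≤ 2 * m by omega), if_true]
        rw [pow_succ, pow_mul]
        norm_num
        simpa using hHr
      · simp only [if_neg (show ¬ 2 * m + 2 ≤ 2 * m by omega),
          if_neg (show ¬ 2 * m + 2 = 2 * m + 1 by omega)]
        rw [pow_add, pow_mul]
        norm_num
        exact ht

theorem stmt5 (κ : ℝ) (hκ0 : 0 < κ) (hκ : κ < 1 / 2) (n : ℕ) (hn : 3 ≤ n) :
    ∃ p : ℝ[X], p.natDegree = n ∧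
      (∀ x : ℝ, p.IsRoot x → rootMultiplicity x p = 1) ∧
      (derivative p).roots.toFinset.card = n - 1 ∧
      Zreal (Hk κ p) = n + Zreal p - 2 := by
  have hex : ∀ m, 1 ≤ m → ∃ p a, Alternating κ m p a := by
    intro m hm
    induction m, hm using Nat.le_induction with
    | base => exact alternating_base hκ0 hκ
    | succ m _ ih =>
      obtain ⟨p, a, h⟩ := ih
      exact alternating_step hκ0 hκ h
  obtain ⟨m, rfl⟩ : ∃ m, n = m + 1 := ⟨n - 1, by omega⟩
  obtain ⟨p, a, hd, hr, -, hmono, hs⟩ := hex m (by omega)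
  have hp0 : p ≠ 0 := by
    rintro rfl
    simp at hd
  have hle := Multiset.toFinset_card_le p.roots
  have hdeg := card_roots' p
  have hcard : Multiset.card p.roots = m + 1 := by omega
  have hnodup : p.roots.Nodup := Multiset.toFinset_card_eq_card_iff_nodup.mp (by omega)
  refine ⟨p, hd, ?_, ?_, ?_⟩
  · intro x hx
    have h1 := Multiset.nodup_iff_count_le_one.mp hnodup x
    rw [count_roots] at h1
    have h2 := (rootMultiplicity_pos hp0).mpr hx
    omega
  · have h1 := card_roots_toFinset_le_derivative p
    have h2 := Multiset.toFinset_card_le (derivative p).roots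
    have h3 := card_roots' (derivative p)
    have h4 := natDegree_derivative_le p
    omega
  · have hH0 : Hk κ p ≠ 0 := by
      intro h
      have := coeff_Hk_neg hκ (by omega) hd
      simp [h] at this
    have h1 := le_card_roots_of_alternating hH0 hmono hs
    have h2 := Multiset.toFinset_card_le (Hk κ p).roots
    have h3 := card_roots' (Hk κ p)
    have h4 := natDegree_Hk_le κ (by omega) hd
    unfold Zreal
    omega
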